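/- Let r ≥ 2 be an integer and let G be a distance-regular graph with intersection array {(r+1)², (r−1)(r+2), 1; 1, r+2, (r+1)²}. Then G is an antipodal r-cover of diameter 3, its smallest adjacency eigenvalue equals −(r+1), and its distance matrix 𝔻₁ has exactly three distinct eigenvalues. -/

import Mathlib

open Matrix

variable {V : Type*} [Fintype V] [DecidableEq V]

/-- The distance-`i` matrix of a graph: the `(x,y)` entry is 1 if `dist x y = i`, else 0. -/
noncomputable def distM (G : SimpleGraph V) (i : ℕ) : Matrix V V ℝ :=
  Matrix.of fun x y => if G.dist x y = i then (1 : ℝ) else 0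

/-- The `q`-distance matrix `𝔻_q = ∑_{i=1}^D (1 + 1/q + ⋯ + 1/q^{i-1}) • A_i`. -/
noncomputable def qDist (G : SimpleGraph V) (D : ℕ) (q : ℝ) : Matrix V V ℝ :=
  ∑ i ∈ Finset.Icc 1 D, (∑ j ∈ Finset.range i, (1 / q) ^ j) • distM G i

/-- `G` is distance-regular with diameter `D` and intersection numbers `b i`, `c i`
(with `c 1 = 1`): for any vertices `x, y` at distance `i ≤ D`, the number of neighbors
of `y` at distance `i - 1` from `x` is `c i` and the number of neighbors of `y` at
distance `i + 1` from `x` is `b i`. -/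
def IsDRG (G : SimpleGraph V) (D : ℕ) (b c : ℕ → ℕ) : Prop :=
  G.Connected ∧
  (∀ x y : V, G.dist x y ≤ D) ∧
  (∃ x y : V, G.dist x y = D) ∧
  c 1 = 1 ∧
  ∀ i ≤ D, ∀ x y : V, G.dist x y = i →
    ({z : V | G.Adj y z ∧ G.dist x z = i - 1} : Set V).ncard = c i ∧
    ({z : V | G.Adj y z ∧ G.dist x z = i + 1} : Set V).ncard = b i

/-- `a i = k - b i - c i` as a real number, where `k = b 0`. -/
noncomputable def aInt (b c : ℕ → ℕ) (i : ℕ) : ℝ := (b 0 : ℝ) - (b i : ℝ) - (c i : ℝ)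

/-- `G` is antipodal with diameter `D`: being equal or at distance `D` is an equivalence
relation on the vertices. -/
def IsAntipodal (G : SimpleGraph V) (D : ℕ) : Prop :=
  ∀ u v w : V, G.dist u v = D → G.dist u w = D → (v = w ∨ G.dist v w = D)

/-- `G` is an antipodal `r`-cover with diameter `D`: every antipodal class has exactly `r`
elements. -/
def IsAntipodalCover (G : SimpleGraph V) (D r : ℕ) : Prop :=
  IsAntipodal G D ∧ ∀ x : V, ({y : V | y = x ∨ G.dist x y = D} : Set V).ncard = r

lemma mem_spec' (M : Matrix V V ℝ) (μ : ℝ) :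
    μ ∈ spectrum ℝ M ↔ ∃ v : V → ℝ, v ≠ 0 ∧ M *ᵥ v = μ • v := by
  rw [← Matrix.spectrum_toLin', ← Module.End.hasEigenvalue_iff_mem_spectrum]
  constructor
  · intro h
    obtain ⟨v, hv⟩ := h.exists_hasEigenvector
    exact ⟨v, hv.2, by simpa using hv.apply_eq_smul⟩
  · rintro ⟨v, hv, h⟩
    exact Module.End.hasEigenvalue_of_hasEigenvector
      (Module.End.hasEigenvector_iff.2 ⟨Module.End.mem_eigenspace_iff.2 (by simpa using h), hv⟩)

lemma alg_part (A K D : Matrix V V ℝ) (r : ℕ) (hr : 2 ≤ r) (x0 : V)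
    (hAt : Aᵀ = A) (hKt : Kᵀ = K)
    (hA0 : A x0 x0 = 0) (hK0 : K x0 x0 = 1)
    (hA2 : A * A = ((r:ℝ)+1)^2 • 1 + ((r:ℝ)+2) • (Matrix.of (fun _ _ => (1:ℝ)) - K))
    (hKA : K * A = Matrix.of (fun _ _ => (1:ℝ)) - K)
    (hA1 : ∀ x, ∑ y, A x y = ((r:ℝ)+1)^2)
    (hD : D = (2:ℝ) • Matrix.of (fun _ _ => (1:ℝ)) - (3:ℝ) • 1 - A + K) :
    (∀ x, ∑ y, K x y = r) ∧
    ((-(r : ℝ) - 1) ∈ spectrum ℝ A ∧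
      ∀ μ ∈ spectrum ℝ A, -(r : ℝ) - 1 ≤ μ) ∧
    (spectrum ℝ D).ncard = 3 := by
  have hr' : (2:ℝ) ≤ r := by exact_mod_cast hr
  set J : Matrix V V ℝ := Matrix.of (fun _ _ => (1:ℝ)) with hJ
  have hJt : Jᵀ = J := by ext; simp [hJ]
  have hAK : A * K = J - K := by
    have := congrArg Matrix.transpose hKA
    simpa [Matrix.transpose_mul, hAt, hKt, hJt] using this
  set e : V → ℝ := fun _ => 1 with he
  have hJv : ∀ v : V → ℝ, J *ᵥ v = (∑ y, v y) • e := by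
    intro v; ext x; simp [hJ, he, Matrix.mulVec, dotProduct]
  have hAe : A *ᵥ e = ((r:ℝ)+1)^2 • e := by
    ext x; simpa [he, Matrix.mulVec, dotProduct] using hA1 x
  have hrow : ∀ (M : Matrix V V ℝ) x, (M *ᵥ e) x = ∑ y, M x y := by
    intro M x; simp [he, Matrix.mulVec, dotProduct]
  have hs : ∀ x, ∑ y, K x y = r := by
    -- from K A e = (J-K) e and A A e
    have h1 : K *ᵥ (A *ᵥ e) = J *ᵥ e - K *ᵥ e := by
      rw [Matrix.mulVec_mulVec, hKA, Matrix.sub_mulVec]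
    have h2 : A *ᵥ (A *ᵥ e) = ((r:ℝ)+1)^2 • e + ((r:ℝ)+2) • (J *ᵥ e - K *ᵥ e) := by
      rw [Matrix.mulVec_mulVec, hA2, Matrix.add_mulVec, Matrix.smul_mulVec, Matrix.smul_mulVec,
        Matrix.sub_mulVec, Matrix.one_mulVec]
    intro x
    rw [hAe, Matrix.mulVec_smul] at h1 h2
    have h1 := congrFun h1 x
    have h2 := congrFun h2 x
    rw [hAe] at h2
    rw [← hrow]
    simp only [Pi.smul_apply, Pi.sub_apply, Pi.add_apply, smul_eq_mul] at h1 h2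
    have hex : e x = 1 := rfl
    rw [hex] at h2
    rw [← h1] at h2
    have : ((r:ℝ)+1)^2 * ((r:ℝ)+2) * ((K *ᵥ e) x - r) = 0 := by linear_combination -h2
    have h3 : ((r:ℝ)+1)^2 * ((r:ℝ)+2) ≠ 0 := by positivity
    have := (mul_eq_zero.1 this).resolve_left h3
    linarith
  have hKe : K *ᵥ e = (r:ℝ) • e := by
    ext x; rw [hrow, hs]; simp [he]
  have hJe' : J *ᵥ e = ((r:ℝ) * (((r:ℝ)+1)^2+1)) • e := by
    have h1 : K *ᵥ (A *ᵥ e) = J *ᵥ e - K *ᵥ e := by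
      rw [Matrix.mulVec_mulVec, hKA, Matrix.sub_mulVec]
    rw [hAe, Matrix.mulVec_smul, hKe] at h1
    rw [eq_sub_iff_add_eq] at h1
    rw [← h1]; module
  have hMJ : ∀ (M : Matrix V V ℝ) (t : ℝ), M *ᵥ e = t • e → M * J = t • J := by
    intro M t h
    ext x y
    have := congrFun h x
    rw [hrow] at this
    simpa [hJ, Matrix.mul_apply, he] using this
  have hAJ := hMJ A _ hAe
  have hKJ := hMJ K _ hKe
  have hJJ := hMJ J _ hJe'
  have hJA : J * A = ((r:ℝ)+1)^2 • J := by
    have := congrArg Matrix.transpose hAJ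
    simpa [Matrix.transpose_mul, hAt, hJt] using this
  have hJK : J * K = (r:ℝ) • J := by
    have := congrArg Matrix.transpose hKJ
    simpa [Matrix.transpose_mul, hKt, hJt] using this
  have hKK : K * K = (r:ℝ) • K := by
    have h1 : K * (A * A) = (J - K) * A := by rw [← mul_assoc, hKA]
    rw [hA2, sub_mul, hJA, hKA, mul_add, mul_smul_comm, mul_smul_comm, mul_one, mul_sub, hKJ] at h1
    have h3 : ((r:ℝ)+2) ≠ 0 := by positivity
    apply smul_right_injective _ h3
    show ((r:ℝ)+2) • (K*K) = ((r:ℝ)+2) • ((r:ℝ) • K)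
    have h4 : ((r:ℝ)+2) • (K*K) = ((r:ℝ)+1)^2 • K + ((r:ℝ)+2) • (r:ℝ) • J
      - (((r:ℝ)+1)^2 • J - (J - K)) := by
      rw [← h1]; module
    rw [h4]; module
  -- eigenvectors
  have hM : ∀ t : ℝ, t^2 = ((r:ℝ)+1)^2 → ∃ v : V → ℝ, v ≠ 0 ∧ A *ᵥ v = t • v ∧
      J *ᵥ v = 0 ∧ K *ᵥ v = 0 := by
    intro t ht
    set M : Matrix V V ℝ := (r:ℝ) • A - J + K + t • ((r:ℝ) • 1 - K) with hMdef
    have hAM : A * M = t • M := by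
      rw [hMdef]
      simp only [mul_add, mul_sub, mul_smul_comm, mul_one, hA2, hAJ, hAK]
      have : ((r:ℝ)+1)^2 = t * t := by rw [← ht]; ring
      ext x y
      simp only [Matrix.add_apply, Matrix.sub_apply, Matrix.smul_apply, smul_eq_mul]
      linear_combination ((1 : Matrix V V ℝ) x y * r - K x y) * (this)
    have hJM : J * M = 0 := by
      rw [hMdef]
      simp only [mul_add, mul_sub, mul_smul_comm, mul_one, hJJ, hJA, hJK]
      module
    have hKM : K * M = 0 := by
      rw [hMdef]
      simp only [mul_add, mul_sub, mul_smul_comm, mul_one, hKK, hKJ, hKA]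
      module
    have hcol : ∀ B : Matrix V V ℝ, B *ᵥ (fun x => M x x0) = fun x => (B * M) x x0 := by
      intro B; ext x; simp [Matrix.mulVec, dotProduct, Matrix.mul_apply]
    refine ⟨fun x => M x x0, ?_, ?_, ?_, ?_⟩
    · intro h
      have h := congrFun h x0
      have hj : J x0 x0 = 1 := rfl
      simp [hMdef, hA0, hK0, hj] at h
      rcases h with h | h
      · subst h; nlinarith
      · linarith
    · rw [hcol, hAM]; rfl
    · rw [hcol, hJM]; rfl
    · rw [hcol, hKM]; rfl
  have hsum : ∀ (M : Matrix V V ℝ) (s : ℝ), J * M = s • J → ∀ (v : V → ℝ) (μ : ℝ),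
      M *ᵥ v = μ • v → μ = s ∨ J *ᵥ v = 0 := by
    intro M s h v μ hv
    have h1 : J *ᵥ (M *ᵥ v) = s • (J *ᵥ v) := by
      rw [Matrix.mulVec_mulVec, h, Matrix.smul_mulVec]
    rw [hv, Matrix.mulVec_smul] at h1
    have : (μ - s) • (J *ᵥ v) = 0 := by rw [sub_smul, h1, sub_self]
    rcases smul_eq_zero.1 this with h | h
    · left; linarith
    · right; exact h
  have hA2v : ∀ v : V → ℝ, J *ᵥ v = 0 → K *ᵥ v = 0 → A *ᵥ (A *ᵥ v) = ((r:ℝ)+1)^2 • v := by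
    intro v h1 h2
    rw [Matrix.mulVec_mulVec, hA2, Matrix.add_mulVec, Matrix.smul_mulVec, Matrix.smul_mulVec,
        Matrix.sub_mulVec, Matrix.one_mulVec, h1, h2]; simp
  refine ⟨hs, ⟨?_, ?_⟩, ?_⟩
  · obtain ⟨v, hv, h, -⟩ := hM (-(r:ℝ)-1) (by ring)
    exact (mem_spec' _ _).2 ⟨v, hv, h⟩
  · intro μ hμ
    obtain ⟨v, hv, h⟩ := (mem_spec' _ _).1 hμ
    rcases hsum A _ hJA v μ h with h1 | h1
    · rw [h1]; nlinarith
    have h2 : K *ᵥ (A *ᵥ v) = - (K *ᵥ v) := by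
      rw [Matrix.mulVec_mulVec, hKA, Matrix.sub_mulVec, h1, zero_sub]
    rw [h, Matrix.mulVec_smul] at h2
    have h3 : (μ + 1) • (K *ᵥ v) = 0 := by rw [add_smul, h2]; simp
    rcases smul_eq_zero.1 h3 with h3 | h3
    · linarith
    have h4 := hA2v v h1 h3
    rw [h, Matrix.mulVec_smul, h, smul_smul] at h4
    have h5 := smul_left_injective ℝ hv h4
    have h6 : μ * μ = ((r:ℝ)+1)^2 := h5
    nlinarith
  · have hJD : J * D = (2 * ((r:ℝ) * (((r:ℝ)+1)^2+1)) - 3 - ((r:ℝ)+1)^2 + r) • J := by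
      rw [hD]
      simp only [mul_add, mul_sub, mul_smul_comm, mul_one, hJJ, hJA, hJK]
      module
    have hDv : ∀ v : V → ℝ, D *ᵥ v = (2:ℝ) • (J *ᵥ v) - (3:ℝ) • v - A *ᵥ v + K *ᵥ v := by
      intro v
      rw [hD]
      simp only [Matrix.add_mulVec, Matrix.sub_mulVec, Matrix.smul_mulVec, Matrix.one_mulVec]
    have hset : spectrum ℝ D = {2 * ((r:ℝ) * (((r:ℝ)+1)^2+1)) - 3 - ((r:ℝ)+1)^2 + r,
        (r:ℝ) - 2, -(r:ℝ) - 4} := by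
      ext μ
      simp only [Set.mem_insert_iff, Set.mem_singleton_iff]
      rw [mem_spec']
      constructor
      · rintro ⟨v, hv, h⟩
        rcases hsum D _ hJD v μ h with h1 | h1
        · left; exact h1
        right
        have h2 : K *ᵥ (A *ᵥ v) = - (K *ᵥ v) := by
          rw [Matrix.mulVec_mulVec, hKA, Matrix.sub_mulVec, h1, zero_sub]
        have h3 : K *ᵥ (K *ᵥ v) = (r:ℝ) • (K *ᵥ v) := by
          rw [Matrix.mulVec_mulVec, hKK, Matrix.smul_mulVec]
        have h4 := h
        rw [hDv, h1] at h4
        have h5 := congrArg (fun w => K *ᵥ w) h4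
        simp only [Matrix.mulVec_add, Matrix.mulVec_sub, Matrix.mulVec_smul, h2, h3,
          Matrix.mulVec_zero] at h5
        have h6 : (μ - (r - 2)) • (K *ᵥ v) = 0 := by
          rw [sub_smul, ← h5]; module
        rcases smul_eq_zero.1 h6 with h6 | h6
        · left; linarith
        have h7 : A *ᵥ v = (-3 - μ) • v := by
          rw [sub_smul, ← h4, h6]; module
        have h8 := hA2v v h1 h6
        rw [h7, Matrix.mulVec_smul, h7, smul_smul] at h8
        have h9 : (-3 - μ) * (-3 - μ) = ((r:ℝ)+1)^2 := smul_left_injective ℝ hv h8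
        have h10 : (μ - (r - 2)) * (μ - (-r - 4)) = 0 := by linear_combination h9
        rcases mul_eq_zero.1 h10 with h | h
        · left; linarith
        · right; linarith
      · rintro (h | h | h)
        · refine ⟨e, fun h => by simpa [he] using congrFun h x0, ?_⟩
          rw [hDv, hJe', hAe, hKe, h]; module
        · obtain ⟨v, hv, h1, h2, h3⟩ := hM (-(r:ℝ)-1) (by ring)
          refine ⟨v, hv, ?_⟩
          rw [hDv, h1, h2, h3, h]; module
        · obtain ⟨v, hv, h1, h2, h3⟩ := hM ((r:ℝ)+1) (by ring)
          refine ⟨v, hv, ?_⟩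
          rw [hDv, h1, h2, h3, h]; module
    rw [hset, Set.ncard_eq_three]
    refine ⟨_, _, _, ?_, ?_, ?_, rfl⟩
    · intro h; nlinarith [mul_nonneg (by linarith : (0:ℝ) ≤ r) (sq_nonneg (r:ℝ)), sq_nonneg (r:ℝ)]
    · intro h; nlinarith [mul_nonneg (by linarith : (0:ℝ) ≤ r) (sq_nonneg (r:ℝ)), sq_nonneg (r:ℝ)]
    · intro h; linarith

lemma comb_part (G : SimpleGraph V) (b c : ℕ → ℕ) (hG : IsDRG G 3 b c)
    (hk : c 3 = b 0) (hb2 : b 2 = 1) : IsAntipodal G 3 := by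
  obtain ⟨hconn, hD, -, -, hreg⟩ := hG
  intro u v w huv huw
  by_contra hne
  push Not at hne
  have key : ∀ z, G.Adj v z → G.dist u z = 2 := by
    have h1 := (hreg 3 le_rfl u v huv).1
    have h2 := (hreg 0 (by omega) v v (by simp)).2
    rw [hk, ← h2] at h1
    have hsub : ({z : V | G.Adj v z ∧ G.dist u z = 3 - 1} : Set V) ⊆
        {z : V | G.Adj v z ∧ G.dist v z = 0 + 1} := by
      rintro z ⟨ha, -⟩
      exact ⟨ha, by simpa using ha⟩
    have := Set.eq_of_subset_of_ncard_le hsub h1.ge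
    intro z hz
    have hz' : z ∈ {z : V | G.Adj v z ∧ G.dist v z = 0 + 1} := ⟨hz, by simpa using hz⟩
    rw [← this] at hz'
    exact hz'.2
  have h0 := hD v w
  have hcase : G.dist v w = 0 ∨ G.dist v w = 1 ∨ G.dist v w = 2 := by omega
  rcases hcase with h | h | h
  · exact hne.1 (hconn.dist_eq_zero_iff.1 h)
  · have := key w (SimpleGraph.dist_eq_one_iff_adj.1 h)
    omega
  · obtain ⟨p, hp⟩ := hconn.exists_walk_length_eq_dist v w
    rw [h] at hp
    obtain ⟨z, hvz, hzw⟩ : ∃ z, G.Adj v z ∧ G.Adj z w := by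
      match p, hp with
      | .cons h1 (.cons h2 .nil), _ => exact ⟨_, h1, h2⟩
    have h3 := (hreg 2 (by omega) u z (key z hvz)).2
    rw [hb2, Set.ncard_eq_one] at h3
    obtain ⟨a, ha⟩ := h3
    have hv : v ∈ ({a} : Set V) := ha ▸ ⟨hvz.symm, huv⟩
    have hw : w ∈ ({a} : Set V) := ha ▸ ⟨hzw, huw⟩
    rw [Set.mem_singleton_iff] at hv hw
    exact hne.1 (hv.trans hw.symm)

theorem stmt19 (G : SimpleGraph V) (b c : ℕ → ℕ) (r : ℕ) (hr : 2 ≤ r)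
    (hG : IsDRG G 3 b c)
    (hb0 : b 0 = (r + 1) ^ 2) (hb1 : b 1 = (r - 1) * (r + 2)) (hb2 : b 2 = 1)
    (hc2 : c 2 = r + 2) (hc3 : c 3 = (r + 1) ^ 2) :
    IsAntipodalCover G 3 r ∧
    ((-(r : ℝ) - 1) ∈ spectrum ℝ (distM G 1) ∧
      ∀ μ ∈ spectrum ℝ (distM G 1), -(r : ℝ) - 1 ≤ μ) ∧
    (spectrum ℝ (qDist G 3 1)).ncard = 3 := by
  classical
  have hanti := comb_part G b c hG (by rw [hc3, hb0]) hb2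
  obtain ⟨hconn, hD, ⟨x0, _, _⟩, hc1, hreg⟩ := hG
  -- counts
  obtain ⟨N, hN⟩ : ∃ N : V → V → ℕ → ℕ, ∀ x y i,
      N x y i = (Finset.univ.filter fun z => G.Adj y z ∧ G.dist x z = i).card := ⟨_, fun _ _ _ => rfl⟩
  have hNs : ∀ x y i, ({z : V | G.Adj y z ∧ G.dist x z = i} : Set V).ncard = N x y i := by
    intro x y i
    rw [hN, ← Set.ncard_coe_finset]; congr 1; ext; simp
  have hc : ∀ x y, N x y (G.dist x y - 1) = c (G.dist x y) := fun x y => by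
    rw [← hNs]; exact (hreg _ (hD x y) x y rfl).1
  have hb : ∀ x y, N x y (G.dist x y + 1) = b (G.dist x y) := fun x y => by
    rw [← hNs]; exact (hreg _ (hD x y) x y rfl).2
  have hdeg : ∀ y, (Finset.univ.filter fun z => G.Adj y z).card = (r+1)^2 := by
    intro y
    have := hb y y
    rw [SimpleGraph.dist_self, hb0, hN] at this
    rw [← this]; congr 1; ext z; simp
  have htot : ∀ x y, N x y 0 + N x y 1 + N x y 2 + N x y 3 = (r+1)^2 := by
    intro x y
    rw [← hdeg y, Finset.card_eq_sum_card_fiberwise (f := fun z => G.dist x z)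
      (t := Finset.range 4) (fun z _ => by have := hD x z; simp; omega)]
    simp [Finset.sum_range_succ, hN, Finset.filter_filter]
  have htri : ∀ x y i, N x y i ≠ 0 → i ≤ G.dist x y + 1 ∧ G.dist x y ≤ i + 1 := by
    intro x y i h
    rw [hN, Finset.card_ne_zero] at h
    obtain ⟨z, hz⟩ := h
    simp only [Finset.mem_filter, Finset.mem_univ, true_and] at hz
    have h1 := SimpleGraph.dist_eq_one_iff_adj.2 hz.1
    have h2 := hconn.dist_triangle (u := x) (v := y) (w := z)
    have h3 := hconn.dist_triangle (u := x) (v := z) (w := y)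
    rw [SimpleGraph.dist_comm (u := z)] at h3
    omega
  have hN0 : ∀ x y, G.dist x y ≠ 1 → N x y 0 = 0 := by
    intro x y h
    rw [hN, Finset.card_eq_zero, Finset.filter_eq_empty_iff]
    rintro z - ⟨h1, h2⟩
    rw [hconn.dist_eq_zero_iff] at h2
    subst h2
    exact h (SimpleGraph.dist_eq_one_iff_adj.2 h1.symm)
  have hN1 : ∀ x y, N x y 1 = if G.dist x y = 0 then (r+1)^2 else
      if G.dist x y = 3 then 0 else r + 2 := by
    intro x y
    have h1 := hc x y
    have h2 := hb x y
    have h3 := htot x y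
    have h4 := htri x y
    have h0 := hD x y
    interval_cases hd : G.dist x y
    · simpa [hb0] using h2
    · have h5 : N x y 3 = 0 := by by_contra h; have := h4 _ h; omega
      simp only [hc1, hb1] at h1 h2
      norm_num at h1 h2
      rw [h1, h2, h5] at h3
      simp
      obtain ⟨s, rfl⟩ := Nat.exists_eq_add_of_le hr
      have : 2 + s - 1 = s + 1 := by omega
      rw [this] at h3
      nlinarith
    · simpa [hc2] using h1
    · simp; by_contra h; have := h4 _ h; omega
  have hN3 : ∀ x y, N x y 0 + N x y 3 = if G.dist x y = 0 ∨ G.dist x y = 3 then 0 else 1 := by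
    intro x y
    have h1 := hc x y
    have h2 := hb x y
    have h3 := htot x y
    have h4 := htri x y
    have h0 := hD x y
    have h6 := hN0 x y
    have h7 : ∀ i, G.dist x y + 1 < i → N x y i = 0 := by
      intro i hi; by_contra h; have := h4 _ h; omega
    interval_cases hd : G.dist x y
    · simp [h6, h7]
    · simp [h7]; simpa [hc1] using h1
    · simp [h6]; simpa [hb2] using h2
    · simp [h6]; rw [hc3] at h1; norm_num at h1; omega
  set K : Matrix V V ℝ := Matrix.of fun x y => if G.dist x y = 0 ∨ G.dist x y = 3 then 1 else 0
    with hK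
  have hAs : ∀ x y, distM G 1 x y = if G.Adj x y then 1 else 0 := by
    intro x y; simp [distM]
  have key := alg_part (distM G 1) K (qDist G 3 1) r hr x0
    (by ext x y; simp only [Matrix.transpose_apply, hAs, G.adj_comm x y])
    (by ext x y; simp only [Matrix.transpose_apply, hK, Matrix.of_apply, SimpleGraph.dist_comm (u := x) (v := y)])
    (by simp [distM]) (by simp [hK])
    (by
      ext x y
      have h : (distM G 1 * distM G 1) x y = N x y 1 := by
        simp only [Matrix.mul_apply, hN, Finset.card_filter]
        push_cast
        refine Finset.sum_congr rfl fun z _ => ?_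
        simp only [hAs, G.adj_comm z y, SimpleGraph.dist_eq_one_iff_adj]
        by_cases h1 : G.Adj x z <;> by_cases h2 : G.Adj y z <;> simp [h1, h2]
      rw [h, hN1]
      simp only [Matrix.add_apply, Matrix.smul_apply, Matrix.sub_apply, Matrix.one_apply, hK,
        Matrix.of_apply, smul_eq_mul, ← hconn.dist_eq_zero_iff (u := x)]
      by_cases h1 : G.dist x y = 0 <;> by_cases h2 : G.dist x y = 3 <;> simp [h1, h2])
    (by
      ext x y
      have h : (K * distM G 1) x y = (N x y 0 + N x y 3 : ℕ) := by
        simp only [Matrix.mul_apply, hN, Finset.card_filter, ← Finset.sum_add_distrib]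
        push_cast
        refine Finset.sum_congr rfl fun z _ => ?_
        simp only [hAs, G.adj_comm z y, hK, Matrix.of_apply]
        by_cases h1 : G.dist x z = 0 <;> by_cases h3 : G.dist x z = 3 <;>
          by_cases h2 : G.Adj y z <;> simp [h1, h2, h3] <;> omega
      rw [h, hN3]
      simp only [Matrix.sub_apply, hK, Matrix.of_apply]
      split_ifs <;> simp)
    (by
      intro x
      simp only [hAs]
      have := hdeg x
      rw [Finset.sum_boole, this]; push_cast; rfl)
    (by
      ext x y
      simp only [qDist, Matrix.add_apply, Matrix.smul_apply, Matrix.sub_apply, Matrix.one_apply, hK,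
        Matrix.of_apply, smul_eq_mul, ← hconn.dist_eq_zero_iff (u := x), Matrix.sum_apply, distM]
      rw [show Finset.Icc 1 3 = {1, 2, 3} from rfl]
      have h0 := hD x y
      interval_cases hd : G.dist x y <;> norm_num [Finset.sum_range_succ])
  refine ⟨⟨hanti, fun x => ?_⟩, key.2⟩
  have h := key.1 x
  have h2 : ({y : V | y = x ∨ G.dist x y = 3} : Set V) =
    ((Finset.univ.filter fun y => G.dist x y = 0 ∨ G.dist x y = 3 : Finset V) : Set V) := by
    ext y; simp [hconn.dist_eq_zero_iff, eq_comm]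
  rw [h2, Set.ncard_coe_finset]
  simp only [hK, Matrix.of_apply, Finset.sum_boole] at h
  exact_mod_cast h
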